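/- arXiv:2407.05114 — 2 statements merged into one kernel-verified Lean document; each statement's English description precedes it below -/
import Mathlib

section
/- Let 0 < δ ≤ 1, let r > 0, and let K be a c-packed polygonal curve in ℝ^d all of whose edges have length at least δr. Then for every point q ∈ ℝ^d there exists a finite set W of at most 18·c/δ² points, each lying on K and each within distance 2r of q, such that for every point k on K with ‖k − q‖ ≤ 2r there exist points u, v ∈ W lying on the same edge of K as k, with k on the subsegment of that edge from u to v, ‖u − k‖ ≤ δr, and ‖v − k‖ ≤ δr. -/
open scoped BigOperators

noncomputable section

/-- Points of `d`-dimensional Euclidean space. -/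
abbrev Pt (d : ℕ) := EuclideanSpace ℝ (Fin d)

/-- A reparametrization: a continuous nondecreasing surjection of `[0,1]` onto itself
(equivalently, continuous and monotone on `[0,1]` with `α 0 = 0` and `α 1 = 1`). -/
structure IsReparam (α : ℝ → ℝ) : Prop where
  continuousOn : ContinuousOn α (Set.Icc 0 1)
  monotoneOn : MonotoneOn α (Set.Icc 0 1)
  map_zero : α 0 = 0
  map_one : α 1 = 1

/-- The Fréchet distance between two curves parametrized over `[0,1]`. -/
noncomputable def frechetDist {d : ℕ} (P Q : ℝ → Pt d) : ℝ :=
  sInf {r : ℝ | ∃ α β : ℝ → ℝ, IsReparam α ∧ IsReparam β ∧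
    r = ⨆ t : Set.Icc (0:ℝ) 1, dist (P (α (t : ℝ))) (Q (β (t : ℝ)))}

/-- The straight-line curve from `a` to `b`, parametrized over `[0,1]`. -/
def seg {d : ℕ} (a b : Pt d) : ℝ → Pt d := fun t => (1 - t) • a + t • b

/-- The subcurve `K|[s,t]`, reparametrized over `[0,1]`. -/
def subcurve {d : ℕ} (K : ℝ → Pt d) (s t : ℝ) : ℝ → Pt d := fun u => K (s + u * (t - s))

/-- `K` is affine-linear on `[a,b]` (constant if `a = b`, by `div_zero`). -/
def AffineOn {d : ℕ} (K : ℝ → Pt d) (a b : ℝ) : Prop :=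
  ∀ x ∈ Set.Icc a b, K x = K a + ((x - a) / (b - a)) • (K b - K a)

/-- Concatenation of two curves parametrized over `[0,1]`. -/
noncomputable def concat {d : ℕ} (A B : ℝ → Pt d) : ℝ → Pt d :=
  fun t => if t ≤ 1 / 2 then A (2 * t) else B (2 * t - 1)

/-- The point at parameter `t ∈ [0,1]` on the segment with endpoints `e.1`, `e.2`. -/
def interpEdge {d : ℕ} (e : Pt d × Pt d) (t : ℝ) : Pt d := (1 - t) • e.1 + t • e.2

/-- The edges of a polygonal curve given by its list of vertices. -/
def edgesOf {d : ℕ} (l : List (Pt d)) : List (Pt d × Pt d) := l.zip l.tail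

/-- The length of the part of segment `e` inside the closed ball `B(q,r)`. -/
noncomputable def segBallLength {d : ℕ} (e : Pt d × Pt d) (q : Pt d) (r : ℝ) : ℝ :=
  (MeasureTheory.volume
      {t : ℝ | t ∈ Set.Icc (0:ℝ) 1 ∧ interpEdge e t ∈ Metric.closedBall q r}).toReal
    * dist e.1 e.2

/-- A polygonal curve with vertex list `l` is `c`-packed: for every point `q` and radius
`r > 0`, the total length of the curve inside `B(q,r)` is at most `c * r`. -/
def CPacked {d : ℕ} (c : ℝ) (l : List (Pt d)) : Prop :=
  ∀ (q : Pt d) (r : ℝ), 0 < r →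
    ((edgesOf l).map (fun e => segBallLength e q r)).sum ≤ c * r

/-- Greedy scan step of the simplification: starting from the current vertex `cur`, mark
the first vertex at distance at least `μ` from `cur` and continue from it. -/
noncomputable def greedyScan {d : ℕ} (μ : ℝ) : Pt d → List (Pt d) → List (Pt d)
  | _, [] => []
  | cur, p :: rest =>
      if μ ≤ dist cur p then p :: greedyScan μ p rest else greedyScan μ cur rest

open Classical in
/-- The greedy `μ`-simplification of a polygonal curve given by its vertex list: mark the
first vertex, greedily scan forward, and always mark the last vertex. -/
noncomputable def simplList {d : ℕ} (μ : ℝ) : List (Pt d) → List (Pt d)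
  | [] => []
  | p :: rest =>
      let s := p :: greedyScan μ p rest
      match rest.getLast? with
      | none => s
      | some last => if s.getLast? = some last then s else s ++ [last]

/-- `P : [0,1] → ℝ^d` is the polygonal curve through the vertex list `l`, with the uniform
parametrization placing vertex `i` at parameter `i / (|l| - 1)`. -/
def IsPolygonalParamL {d : ℕ} (l : List (Pt d)) (P : ℝ → Pt d) : Prop :=
  (∀ i, i < l.length → P ((i : ℝ) / ((l.length : ℝ) - 1)) = l.getD i 0) ∧
  ∀ i, i + 1 < l.length →
    AffineOn P ((i : ℝ) / ((l.length : ℝ) - 1)) (((i : ℝ) + 1) / ((l.length : ℝ) - 1))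

/-- `Q : [0,1] → ℝ^d` is the polygonal curve with vertices `q 0, …, q (m-1)`, with the
uniform parametrization placing vertex `i` at parameter `i / (m - 1)`. -/
def IsPolygonalParam {d : ℕ} (m : ℕ) (q : ℕ → Pt d) (Q : ℝ → Pt d) : Prop :=
  (∀ i, i < m → Q ((i : ℝ) / ((m : ℝ) - 1)) = q i) ∧
  ∀ i, i + 1 < m →
    AffineOn Q ((i : ℝ) / ((m : ℝ) - 1)) (((i : ℝ) + 1) / ((m : ℝ) - 1))

/-- The Euclidean distance from a point `x` to the segment `e`. -/
noncomputable def segDist {d : ℕ} (e : Pt d × Pt d) (x : Pt d) : ℝ :=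
  sInf {r : ℝ | ∃ t ∈ Set.Icc (0:ℝ) 1, r = dist x (interpEdge e t)}

/-- The trough object of an edge `e`, a subset of `ℝ^d × ℝ`. -/
def trough {d : ℕ} (e : Pt d × Pt d) (δ : ℝ) : Set (Pt d × ℝ) :=
  {p | segDist e p.1 ≤ 4 * p.2 ∧ 4 * p.2 ≤ 8 * δ⁻¹ * dist e.1 e.2}

/-- The axis-parallel hypercube in `ℝ^d × ℝ` with lower corner `(a, b)` and side length `s`. -/
def cube {d : ℕ} (a : Pt d) (b s : ℝ) : Set (Pt d × ℝ) :=
  {p | (∀ i, p.1 i ∈ Set.Icc (a i) (a i + s)) ∧ p.2 ∈ Set.Icc b (b + s)}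

end
theorem interp_dist {d : ℕ} (e : Pt d × Pt d) (s t : ℝ) :
    dist (interpEdge e s) (interpEdge e t) = |s - t| * dist e.1 e.2 := by
  have h : interpEdge e s - interpEdge e t = (t - s) • (e.1 - e.2) := by
    unfold interpEdge; module
  rw [dist_eq_norm, h, norm_smul, Real.norm_eq_abs, abs_sub_comm, dist_eq_norm]

theorem interp_continuous {d : ℕ} (e : Pt d × Pt d) : Continuous (interpEdge e) := by
  unfold interpEdge; fun_prop

theorem segBall_lower {d : ℕ} (e : Pt d × Pt d) (q : Pt d) (R x y : ℝ)
    (h : ∀ t ∈ Set.Icc x y, t ∈ Set.Icc (0:ℝ) 1 ∧ dist (interpEdge e t) q ≤ R) :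
    (y - x) * dist e.1 e.2 ≤ segBallLength e q R := by
  unfold segBallLength
  refine mul_le_mul_of_nonneg_right ?_ dist_nonneg
  have hsub : Set.Icc x y ⊆
      {t : ℝ | t ∈ Set.Icc (0:ℝ) 1 ∧ interpEdge e t ∈ Metric.closedBall q R} :=
    fun t ht => ⟨(h t ht).1, by simpa [Metric.mem_closedBall] using (h t ht).2⟩
  have hfin : MeasureTheory.volume
      {t : ℝ | t ∈ Set.Icc (0:ℝ) 1 ∧ interpEdge e t ∈ Metric.closedBall q R} ≠ ⊤ := by
    refine ne_top_of_le_ne_top ?_ (MeasureTheory.measure_mono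
      (t := Set.Icc (0:ℝ) 1) fun t ht => ht.1)
    simp
  have h1 := ENNReal.toReal_mono hfin (MeasureTheory.measure_mono hsub)
  rw [Real.volume_Icc] at h1
  exact (le_trans (by rw [ENNReal.toReal_ofReal']; exact le_max_left _ _) h1)

theorem interp_between {d : ℕ} (e : Pt d × Pt d) (q : Pt d) (R a b t : ℝ)
    (ha : dist (interpEdge e a) q ≤ R) (hb : dist (interpEdge e b) q ≤ R)
    (hat : a ≤ t) (htb : t ≤ b) : dist (interpEdge e t) q ≤ R := by
  have hc := (convex_closedBall q R).affine_preimage (AffineMap.lineMap (k := ℝ) e.1 e.2)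
  have hE : ∀ s, AffineMap.lineMap (k := ℝ) e.1 e.2 s = interpEdge e s := fun s => by
    rw [AffineMap.lineMap_apply_module]; rfl
  have := hc.ordConnected.out (x := a) (y := b) (by simpa [hE] using ha)
    (by simpa [hE] using hb) ⟨hat, htb⟩
  simpa [hE] using this

theorem edge_points {d : ℕ} (δ r : ℝ) (hδ0 : 0 < δ) (hδ1 : δ ≤ 1) (hr : 0 < r)
    (q : Pt d) (e : Pt d × Pt d) (he : δ * r ≤ dist e.1 e.2) :
    ∃ W : Finset (Pt d),
      (W.card : ℝ) ≤ 3 / (δ * r) * segBallLength e q (3 * r) ∧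
      (∀ w ∈ W, (∃ t ∈ Set.Icc (0:ℝ) 1, w = interpEdge e t) ∧ dist w q ≤ 2 * r) ∧
      (∀ tk ∈ Set.Icc (0:ℝ) 1,
        dist (interpEdge e tk) q ≤ 2 * r →
          ∃ tu ∈ Set.Icc (0:ℝ) 1, ∃ tv ∈ Set.Icc (0:ℝ) 1,
            interpEdge e tu ∈ W ∧ interpEdge e tv ∈ W ∧
            tu ≤ tk ∧ tk ≤ tv ∧
            dist (interpEdge e tu) (interpEdge e tk) ≤ δ * r ∧
            dist (interpEdge e tv) (interpEdge e tk) ≤ δ * r) := by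
  classical
  have hm : 0 < δ * r := by positivity
  have hD : 0 < dist e.1 e.2 := lt_of_lt_of_le hm he
  set D := dist e.1 e.2 with hDdef
  set S : Set ℝ := Set.Icc (0:ℝ) 1 ∩ {t | dist (interpEdge e t) q ≤ 2 * r} with hS
  have hScomp : IsCompact S := isCompact_Icc.inter_right
    (isClosed_le ((interp_continuous e).dist continuous_const) continuous_const)
  rcases S.eq_empty_or_nonempty with hemp | hne
  · refine ⟨∅, ?_, by simp, ?_⟩
    · have : 0 ≤ segBallLength e q (3 * r) := by unfold segBallLength; positivity
      simp only [Finset.card_empty, Nat.cast_zero]; positivity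
    · intro tk h1 h2
      have : tk ∈ S := ⟨h1, h2⟩
      simp [hemp] at this
  obtain ⟨a, haS, ha⟩ := hScomp.exists_isLeast hne
  obtain ⟨b, hbS, hb⟩ := hScomp.exists_isGreatest hne
  have hab : a ≤ b := ha hbS
  have hmid : ∀ t, a ≤ t → t ≤ b → t ∈ Set.Icc (0:ℝ) 1 ∧ dist (interpEdge e t) q ≤ 2 * r :=
    fun t h1 h2 => ⟨⟨haS.1.1.trans h1, h2.trans hbS.1.2⟩,
      interp_between e q _ a b t haS.2 hbS.2 h1 h2⟩
  obtain ⟨h, hh⟩ : ∃ h, h = δ * r / D := ⟨_, rfl⟩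
  have hh0 : 0 < h := by rw [hh]; positivity
  have hh1 : h ≤ 1 := by rw [hh, div_le_one hD]; exact he
  have hhD : h * D = δ * r := by rw [hh]; field_simp
  have hL1 : (b - a) * D ≤ segBallLength e q (3 * r) :=
    segBall_lower e q _ a b fun t ht =>
      ⟨(hmid t ht.1 ht.2).1, (hmid t ht.1 ht.2).2.trans (by linarith)⟩
  have hnear : ∀ t, |t - a| ≤ h → dist (interpEdge e t) q ≤ 3 * r := fun t ht => by
    have h1 := dist_triangle (interpEdge e t) (interpEdge e a) q
    rw [interp_dist] at h1
    have h2 : |t - a| * D ≤ h * D := mul_le_mul_of_nonneg_right ht hD.le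
    have h3 : dist (interpEdge e a) q ≤ 2 * r := haS.2
    nlinarith
  have hL2 : δ * r ≤ segBallLength e q (3 * r) := by
    rw [← hhD]
    have ha0 := haS.1.1
    have ha1 := haS.1.2
    by_cases hc : a + h ≤ 1
    · have := segBall_lower e q (3 * r) a (a + h) fun t ht =>
        ⟨⟨ha0.trans ht.1, ht.2.trans hc⟩, hnear t (by
          rw [abs_le]; constructor <;> linarith [ht.1, ht.2])⟩
      simpa using this
    · have := segBall_lower e q (3 * r) (1 - h) 1 fun t ht =>
        ⟨⟨by linarith [ht.1], ht.2⟩, hnear t (by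
          rw [abs_le]; constructor <;> linarith [ht.1, ht.2])⟩
      simpa using this
  let p : ℕ → ℝ := fun i => min b (a + i * h)
  have hp : ∀ i, a ≤ p i ∧ p i ≤ b := fun i =>
    ⟨le_min hab (by have : 0 ≤ (i:ℝ) * h := by positivity
                    linarith), min_le_left _ _⟩
  refine ⟨(Finset.range (⌊(b - a) / h⌋₊ + 2)).image fun i => interpEdge e (p i), ?_, ?_, ?_⟩
  · have h1 : (((Finset.range (⌊(b - a) / h⌋₊ + 2)).image fun i => interpEdge e (p i)).card : ℝ)
        ≤ (⌊(b - a) / h⌋₊ : ℝ) + 2 := by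
      exact_mod_cast Finset.card_image_le.trans (by simp)
    have h2 : (⌊(b - a) / h⌋₊ : ℝ) ≤ (b - a) / h :=
      Nat.floor_le (div_nonneg (by linarith) hh0.le)
    have h3 : (b - a) / h = (b - a) * D / (δ * r) := by rw [hh]; field_simp
    have h4 : (b - a) * D / (δ * r) + 2 ≤ 3 / (δ * r) * segBallLength e q (3 * r) := by
      rw [div_add' _ _ _ hm.ne', div_mul_eq_mul_div]
      gcongr
      linarith
    linarith
  · intro w hw
    obtain ⟨i, -, rfl⟩ := Finset.mem_image.1 hw
    have := hmid _ (hp i).1 (hp i).2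
    exact ⟨⟨_, this.1, rfl⟩, this.2⟩
  · intro tk h1 h2
    have hka : a ≤ tk := ha ⟨h1, h2⟩
    have hkb : tk ≤ b := hb ⟨h1, h2⟩
    obtain ⟨i, hi⟩ : ∃ i, i = ⌊(tk - a) / h⌋₊ := ⟨_, rfl⟩
    have hi1 : (i:ℝ) * h ≤ tk - a := by
      rw [← le_div_iff₀ hh0, hi]
      exact Nat.floor_le (div_nonneg (by linarith) hh0.le)
    have hi2 : tk - a < ((i:ℝ) + 1) * h := by
      rw [← div_lt_iff₀ hh0, hi]
      exact Nat.lt_floor_add_one _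
    have hi3 : i ≤ ⌊(b - a) / h⌋₊ := by
      rw [hi]; gcongr
    have hpi : p i = a + i * h := min_eq_right (by linarith)
    have hq1 : tk ≤ p (i + 1) := le_min hkb (by push_cast; linarith)
    have hq2 : p (i + 1) ≤ a + ((i:ℝ) + 1) * h := by
      have : p (i + 1) ≤ a + ((i + 1 : ℕ) : ℝ) * h := min_le_right _ _
      simpa using this
    refine ⟨p i, (hmid _ (hp i).1 (hp i).2).1, p (i+1), (hmid _ (hp _).1 (hp _).2).1,
      Finset.mem_image_of_mem _ (by simp; omega), Finset.mem_image_of_mem _ (by simp; omega),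
      by linarith, hq1, ?_, ?_⟩
    · rw [interp_dist, ← hhD]
      refine mul_le_mul_of_nonneg_right ?_ hD.le
      rw [abs_le]; constructor <;> linarith
    · rw [interp_dist, ← hhD]
      refine mul_le_mul_of_nonneg_right ?_ hD.le
      rw [abs_le]; constructor <;> linarith

theorem list_points {d : ℕ} (δ r : ℝ) (hδ0 : 0 < δ) (hδ1 : δ ≤ 1) (hr : 0 < r)
    (q : Pt d) (E : List (Pt d × Pt d)) (hE : ∀ e ∈ E, δ * r ≤ dist e.1 e.2) :
    ∃ W : Finset (Pt d),
      (W.card : ℝ) ≤ 3 / (δ * r) * (E.map (fun e => segBallLength e q (3 * r))).sum ∧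
      (∀ w ∈ W,
        (∃ e ∈ E, ∃ t ∈ Set.Icc (0:ℝ) 1, w = interpEdge e t) ∧ dist w q ≤ 2 * r) ∧
      (∀ e ∈ E, ∀ tk ∈ Set.Icc (0:ℝ) 1,
        dist (interpEdge e tk) q ≤ 2 * r →
          ∃ tu ∈ Set.Icc (0:ℝ) 1, ∃ tv ∈ Set.Icc (0:ℝ) 1,
            interpEdge e tu ∈ W ∧ interpEdge e tv ∈ W ∧
            tu ≤ tk ∧ tk ≤ tv ∧
            dist (interpEdge e tu) (interpEdge e tk) ≤ δ * r ∧
            dist (interpEdge e tv) (interpEdge e tk) ≤ δ * r) := by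
  classical
  induction E with
  | nil => exact ⟨∅, by simp, by simp, by simp⟩
  | cons e E ih =>
    obtain ⟨W, h1, h2, h3⟩ := ih fun e' h => hE e' (List.mem_cons_of_mem _ h)
    obtain ⟨V, g1, g2, g3⟩ := edge_points δ r hδ0 hδ1 hr q e (hE e List.mem_cons_self)
    refine ⟨V ∪ W, ?_, ?_, ?_⟩
    · have : ((V ∪ W).card : ℝ) ≤ V.card + W.card := by exact_mod_cast Finset.card_union_le V W
      rw [List.map_cons, List.sum_cons, mul_add]
      linarith
    · intro w hw
      rcases Finset.mem_union.1 hw with hw | hw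
      · exact ⟨⟨e, List.mem_cons_self, (g2 w hw).1⟩, (g2 w hw).2⟩
      · obtain ⟨⟨e', he', h⟩, h'⟩ := h2 w hw
        exact ⟨⟨e', List.mem_cons_of_mem _ he', h⟩, h'⟩
    · intro e' he' tk hk hd
      rcases List.mem_cons.1 he' with rfl | he'
      · obtain ⟨tu, hu, tv, hv, m1, m2, rest⟩ := g3 tk hk hd
        exact ⟨tu, hu, tv, hv, Finset.mem_union_left _ m1, Finset.mem_union_left _ m2, rest⟩
      · obtain ⟨tu, hu, tv, hv, m1, m2, rest⟩ := h3 e' he' tk hk hd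
        exact ⟨tu, hu, tv, hv, Finset.mem_union_right _ m1, Finset.mem_union_right _ m2, rest⟩

/-- Let `0 < δ ≤ 1`, `r > 0`, and let `K` be a `c`-packed polygonal curve in
`ℝ^d` (vertex list `l`) all of whose edges have length at least `δ r`. Then for every point
`q` there is a finite set `W` of at most `18 c / δ²` points, each on `K` and within distance
`2r` of `q`, such that every point `k` on `K` with `‖k − q‖ ≤ 2r` admits `u, v ∈ W` on the
same edge of `K` as `k`, with `k` on the subsegment from `u` to `v`, `‖u − k‖ ≤ δr` and
`‖v − k‖ ≤ δr`. -/
theorem candidate_points_exist {d : ℕ} (δ r c : ℝ) (hδ0 : 0 < δ) (hδ1 : δ ≤ 1) (hr : 0 < r)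
    (l : List (Pt d)) (hpack : CPacked c l)
    (hedges : ∀ e ∈ edgesOf l, δ * r ≤ dist e.1 e.2)
    (q : Pt d) :
    ∃ W : Finset (Pt d),
      (W.card : ℝ) ≤ 18 * c / δ ^ 2 ∧
      (∀ w ∈ W,
        (∃ e ∈ edgesOf l, ∃ t ∈ Set.Icc (0:ℝ) 1, w = interpEdge e t) ∧ dist w q ≤ 2 * r) ∧
      (∀ e ∈ edgesOf l, ∀ tk ∈ Set.Icc (0:ℝ) 1,
        dist (interpEdge e tk) q ≤ 2 * r →
          ∃ tu ∈ Set.Icc (0:ℝ) 1, ∃ tv ∈ Set.Icc (0:ℝ) 1,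
            interpEdge e tu ∈ W ∧ interpEdge e tv ∈ W ∧
            tu ≤ tk ∧ tk ≤ tv ∧
            dist (interpEdge e tu) (interpEdge e tk) ≤ δ * r ∧
            dist (interpEdge e tv) (interpEdge e tk) ≤ δ * r) := by
  obtain ⟨W, h1, h2, h3⟩ := list_points δ r hδ0 hδ1 hr q (edgesOf l) hedges
  refine ⟨W, ?_, h2, h3⟩
  have hp := hpack q (3 * r) (by linarith)
  have h0 : (W.card : ℝ) ≤ 3 / (δ * r) * (c * (3 * r)) :=
    h1.trans (mul_le_mul_of_nonneg_left hp (by positivity))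
  have h4 : 3 / (δ * r) * (c * (3 * r)) = 9 * c / δ := by field_simp; ring
  rw [h4] at h0
  have hc : 0 ≤ 9 * c / δ := le_trans (by positivity) h0
  have hc' : 0 ≤ c := by
    by_contra hneg
    have : 9 * c / δ < 0 := div_neg_of_neg_of_pos (by linarith) hδ0
    linarith
  refine h0.trans ?_
  rw [div_le_div_iff₀ hδ0 (by positivity)]
  have : c * δ * δ ≤ c * δ * 1 := mul_le_mul_of_nonneg_left hδ1 (by positivity)
  have : 0 ≤ c * δ := by positivity
  nlinarith
end

section
/- There exists a constant C depending only on d such that the following holds. Let 0 < δ ≤ 1 and let K be a c-packed polygonal curve in ℝ^d. For each edge e of K define the trough trough(e,δ) = { (x, z) ∈ ℝ^d × ℝ : dist(x, e) ≤ 4z ≤ 8·δ^{−1}·|e| }, where dist(x,e) is the Euclidean distance from x to the segment e and |e| is the length of e. Then the collection T = { trough(e,δ) : e an edge of K } is (C·c·δ^{−1})-low-density in ℝ^{d+1}: for every axis-parallel hypercube H in ℝ^{d+1} of side length s, the number of edges e of K such that trough(e,δ) intersects H and the smallest axis-parallel hypercube enclosing trough(e,δ) has side length at least s is at most C·c·δ^{−1}.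 -/
open scoped BigOperators

lemma tld_sum {α : Type*} (f : α → ℝ) (z : α) (l : List α) :
    (l.map f).sum = ∑ i ∈ Finset.range l.length, f (l.getD i z) := by
  induction l with
  | nil => simp
  | cons x xs ih =>
    rw [List.map_cons, List.sum_cons, List.length_cons, Finset.sum_range_succ', ih]
    simp [add_comm]

lemma tld_interp_dist {d : ℕ} (e : Pt d × Pt d) (t u : ℝ) :
    dist (interpEdge e t) (interpEdge e u) = |t - u| * dist e.1 e.2 := by
  have h : interpEdge e t - interpEdge e u = (u - t) • (e.1 - e.2) := by
    simp only [interpEdge]; module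
  rw [dist_eq_norm, h, norm_smul, dist_eq_norm, Real.norm_eq_abs, abs_sub_comm]

lemma tld_segDist_lt {d : ℕ} (e : Pt d × Pt d) (x : Pt d) (r : ℝ) (h : segDist e x < r) :
    ∃ t ∈ Set.Icc (0:ℝ) 1, dist x (interpEdge e t) < r := by
  have hne : {r : ℝ | ∃ t ∈ Set.Icc (0:ℝ) 1, r = dist x (interpEdge e t)}.Nonempty :=
    ⟨_, 0, by simp, rfl⟩
  obtain ⟨y, ⟨t, ht, rfl⟩, hy⟩ := exists_lt_of_csInf_lt hne h
  exact ⟨t, ht, hy⟩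

lemma tld_segDist_nonneg {d : ℕ} (e : Pt d × Pt d) (x : Pt d) : 0 ≤ segDist e x := by
  apply Real.sInf_nonneg
  rintro _ ⟨t, _, rfl⟩
  exact dist_nonneg

lemma tld_segBall_nonneg {d : ℕ} (e : Pt d × Pt d) (q : Pt d) (r : ℝ) :
    0 ≤ segBallLength e q r := mul_nonneg ENNReal.toReal_nonneg dist_nonneg

lemma tld_segBall_ge {d : ℕ} (e : Pt d × Pt d) (q : Pt d) (r t h : ℝ)
    (ht : t ∈ Set.Icc (0:ℝ) 1) (hh : 0 < h) (hL : h ≤ dist e.1 e.2)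
    (hd : dist q (interpEdge e t) + h ≤ r) : h ≤ segBallLength e q r := by
  have hLp : 0 < dist e.1 e.2 := lt_of_lt_of_le hh hL
  set L := dist e.1 e.2 with hLdef
  obtain ⟨ht0, ht1⟩ := ht
  have hw0 : 0 < h / L := div_pos hh hLp
  have hw1 : h / L ≤ 1 := (div_le_one hLp).2 hL
  have hwL : h / L * L = h := by field_simp
  set w := h / L with hw
  have hsub : Set.Icc (t * (1 - w)) (t * (1 - w) + w) ⊆
      {t : ℝ | t ∈ Set.Icc (0:ℝ) 1 ∧ interpEdge e t ∈ Metric.closedBall q r} := by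
    rintro u ⟨hu0, hu1⟩
    refine ⟨⟨by nlinarith, by nlinarith⟩, ?_⟩
    rw [Metric.mem_closedBall]
    have h1 : dist (interpEdge e u) (interpEdge e t) ≤ h := by
      rw [tld_interp_dist, ← hwL]
      apply mul_le_mul_of_nonneg_right _ hLp.le
      rw [abs_le]
      constructor <;> nlinarith
    have h2 := dist_triangle (interpEdge e u) (interpEdge e t) q
    rw [dist_comm (interpEdge e t) q] at h2
    linarith
  have hfin : MeasureTheory.volume
      {t : ℝ | t ∈ Set.Icc (0:ℝ) 1 ∧ interpEdge e t ∈ Metric.closedBall q r} ≠ ⊤ := by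
    refine ne_top_of_le_ne_top (b := MeasureTheory.volume (Set.Icc (0:ℝ) 1)) ?_
      (MeasureTheory.measure_mono fun x hx => hx.1)
    simp
  have hm := ENNReal.toReal_mono hfin (MeasureTheory.measure_mono hsub)
  rw [Real.volume_Icc, add_sub_cancel_left, ENNReal.toReal_ofReal hw0.le] at hm
  unfold segBallLength
  rw [← hLdef]
  calc h = w * L := hwL.symm
    _ ≤ _ := mul_le_mul_of_nonneg_right hm hLp.le

lemma tld_size {d : ℕ} (e : Pt d × Pt d) (δ s : ℝ) (hδ : 0 < δ) (hδ1 : δ ≤ 1) (hs : 0 < s)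
    (h : ∀ (a' : Pt d) (b' s' : ℝ), trough e δ ⊆ cube a' b' s' → s ≤ s') :
    s * δ ≤ 36 * dist e.1 e.2 := by
  set L := dist e.1 e.2 with hLdef
  have hL : 0 ≤ L := dist_nonneg
  have hinv : 1 ≤ δ⁻¹ := (one_le_inv₀ hδ).2 hδ1
  have hLM : L ≤ δ⁻¹ * L := by nlinarith
  have key : s ≤ 18 * (δ⁻¹ * L) + s / 2 := by
    apply h (WithLp.toLp 2 fun i => e.1 i - (9 * (δ⁻¹ * L) + s / 4)) 0
    rintro ⟨x, z⟩ ⟨h1, h2⟩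
    dsimp only at h1 h2
    rw [← hLdef] at h2
    have h0 := tld_segDist_nonneg e x
    obtain ⟨t, ht, hlt⟩ := tld_segDist_lt e x (8 * (δ⁻¹ * L) + s / 4) (by linarith)
    have h3 : dist (interpEdge e t) e.1 ≤ L := by
      have h4 := tld_interp_dist e t 0
      have h5 : interpEdge e 0 = e.1 := by simp [interpEdge]
      rw [h5, sub_zero, abs_of_nonneg ht.1] at h4
      rw [h4, ← hLdef]
      nlinarith [ht.2]
    have h6 := dist_triangle x (interpEdge e t) e.1
    refine ⟨fun i => ?_, ?_⟩
    · have h7 : |x i - e.1 i| ≤ dist x e.1 := by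
        rw [dist_eq_norm]
        exact PiLp.norm_apply_le (x - e.1) i
      have h8 := abs_le.1 h7
      simp only [Set.mem_Icc]
      constructor <;> linarith [h8.1, h8.2]
    · constructor <;> dsimp only <;> nlinarith
  have : δ * (δ⁻¹ * L) = L := by field_simp
  nlinarith

lemma tld_cube_dist {d : ℕ} (a x : Pt d) (s : ℝ) (hs : 0 ≤ s)
    (h : ∀ i, x i ∈ Set.Icc (a i) (a i + s)) : dist a x ≤ √d * s := by
  rw [EuclideanSpace.dist_eq]
  apply Real.sqrt_le_iff.2
  refine ⟨by positivity, ?_⟩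
  rw [mul_pow, Real.sq_sqrt (by positivity)]
  calc ∑ i, dist (a i) (x i) ^ 2 ≤ ∑ i : Fin d, s ^ 2 := by
        apply Finset.sum_le_sum
        intro i _
        apply pow_le_pow_left₀ dist_nonneg
        rw [Real.dist_eq, abs_le]
        constructor <;> linarith [(h i).1, (h i).2]
    _ = d * s ^ 2 := by simp

lemma tld_edge {d : ℕ} (e : Pt d × Pt d) (a : Pt d) (b δ s : ℝ) (hδ : 0 < δ) (hδ1 : δ ≤ 1)
    (hs : 0 < s) (hne : (trough e δ ∩ cube a b s).Nonempty)
    (h : ∀ (a' : Pt d) (b' s' : ℝ), trough e δ ⊆ cube a' b' s' → s ≤ s') :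
    δ * max b s / 36 ≤ segBallLength e a ((√d + 10) * max b s) := by
  have hsize := tld_size e δ s hδ hδ1 hs h
  obtain ⟨⟨x, z⟩, ⟨h1, h2⟩, h3, h4⟩ := hne
  dsimp only at h1 h2 h3 h4
  have hbm := le_max_left b s
  have hsm := le_max_right b s
  have hL0 : 0 ≤ dist e.1 e.2 := dist_nonneg
  have hm36 : δ * max b s / 36 ≤ dist e.1 e.2 := by
    rcases max_choice b s with hm | hm <;> rw [hm]
    · have : δ * (8 * δ⁻¹ * dist e.1 e.2) = 8 * dist e.1 e.2 := by field_simp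
      have h5 : b ≤ z := h4.1
      nlinarith [mul_le_mul_of_nonneg_left h2 hδ.le, mul_le_mul_of_nonneg_left h5 hδ.le]
    · linarith
  set m := max b s
  have hm : 0 < m := lt_of_lt_of_le hs hsm
  obtain ⟨t, ht, hlt⟩ := tld_segDist_lt e x (9 * m) (by linarith [h4.2])
  have hax := tld_cube_dist a x s hs.le h3
  have hsq : √d * s ≤ √d * m := mul_le_mul_of_nonneg_left hsm (Real.sqrt_nonneg _)
  apply tld_segBall_ge e a _ t _ ht (by positivity) hm36
  have := dist_triangle a x (interpEdge e t)
  nlinarith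

open Classical in
/-- There is a constant `C` depending only on `d` such that: for every
`0 < δ ≤ 1` and every `c`-packed polygonal curve `K` in `ℝ^d` (vertex list `l`), the
collection of troughs of the edges of `K` is `(C·c·δ⁻¹)`-low-density in `ℝ^{d+1}`: for every
axis-parallel hypercube `H` of side length `s > 0`, the number of edges `e` such that
`trough(e,δ)` meets `H` and every enclosing axis-parallel hypercube of `trough(e,δ)` has
side length at least `s`, is at most `C·c·δ⁻¹`. -/
theorem trough_low_density (d : ℕ) :
    ∃ C : ℝ, 0 < C ∧ ∀ (c δ : ℝ), 0 < δ → δ ≤ 1 →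
      ∀ (l : List (Pt d)), CPacked c l →
        ∀ (a : Pt d) (b s : ℝ), 0 < s →
          (((Finset.range (edgesOf l).length).filter (fun i =>
              (trough ((edgesOf l).getD i (0, 0)) δ ∩ cube a b s).Nonempty ∧
              ∀ (a' : Pt d) (b' s' : ℝ),
                trough ((edgesOf l).getD i (0, 0)) δ ⊆ cube a' b' s' → s ≤ s')).card : ℝ)
            ≤ C * c / δ := by
  refine ⟨36 * (√d + 10), by positivity, ?_⟩
  intro c δ hδ hδ1 l hc a b s hs
  have hm : 0 < max b s := lt_of_lt_of_le hs (le_max_right b s)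
  have hp := hc a ((√d + 10) * max b s) (by positivity)
  rw [tld_sum _ (0, 0)] at hp
  have hle := (Finset.sum_le_sum_of_subset_of_nonneg (Finset.filter_subset (fun i =>
              (trough ((edgesOf l).getD i (0, 0)) δ ∩ cube a b s).Nonempty ∧
              ∀ (a' : Pt d) (b' s' : ℝ),
                trough ((edgesOf l).getD i (0, 0)) δ ⊆ cube a' b' s' → s ≤ s')
      (Finset.range (edgesOf l).length))
    (fun i _ _ => tld_segBall_nonneg ((edgesOf l).getD i (0, 0)) a
      ((√d + 10) * max b s))).trans hp
  have hcard := (Finset.card_nsmul_le_sum _ _ (δ * max b s / 36) (fun i hi =>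
    tld_edge _ a b δ s hδ hδ1 hs (Finset.mem_filter.1 hi).2.1
      (Finset.mem_filter.1 hi).2.2)).trans hle
  rw [nsmul_eq_mul] at hcard
  rw [le_div_iff₀ hδ]
  refine le_of_mul_le_mul_right ?_ hm
  linarith
end
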